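/- Let 𝒢 = (V,E) be a simple directed graph, let i ∈ V, and let G be an admissible network matrix over ℝ(z). Let v be an n-dimensional vector over ℝ(z) such that v_j = 0 for all j ∉ N_i, and for every j ∈ N_i the entry v_j is strictly proper and G_{ji} − v_j ≠ 0. Let u ∈ ℝ^n be the i-th standard basis vector. Then the matrix Ḡ := G − v uᵀ is admissible. -/

import Mathlib

open Polynomial Matrix

noncomputable section

/-- A rational function `f ∈ ℝ(z)` is *proper* if the degree of its numerator is at most
the degree of its denominator. -/
def Proper (f : RatFunc ℝ) : Prop := f.num.degree ≤ f.denom.degree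

/-- A rational function `f ∈ ℝ(z)` is *strictly proper* if the degree of its numerator is
strictly less than the degree of its denominator. -/
def StrictlyProper (f : RatFunc ℝ) : Prop := f.num.degree < f.denom.degree

/-- The (finite) limit at infinity of a proper rational function: the ratio of leading
coefficients when the degrees of numerator and denominator coincide, and `0` otherwise. -/
def limAtInfty (f : RatFunc ℝ) : ℝ :=
  if f.num.degree = f.denom.degree then f.num.leadingCoeff / f.denom.leadingCoeff else 0

/-- The set `N_i` of out-neighbours of node `i` in the directed graph with edge set `E`. -/
def Nout {n : ℕ} (E : Finset (Fin n × Fin n)) (i : Fin n) : Finset (Fin n) :=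
  Finset.univ.filter fun j => (i, j) ∈ E

/-- The real matrix `lim_{z→∞} (I - G(z))`, taken entrywise. -/
def limMatrix {n : ℕ} (G : Matrix (Fin n) (Fin n) (RatFunc ℝ)) : Matrix (Fin n) (Fin n) ℝ :=
  Matrix.of fun a b => limAtInfty ((1 - G) a b)

/-- A network matrix `G` over `ℝ(z)` is *admissible* for the graph with edge set `E` if
(P1) every entry is proper, (P2) `G j i ≠ 0` iff `(i,j) ∈ E`, and
(P3) every principal minor of `lim_{z→∞}(I - G(z))` is nonzero. -/
def Admissible {n : ℕ} (E : Finset (Fin n × Fin n))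
    (G : Matrix (Fin n) (Fin n) (RatFunc ℝ)) : Prop :=
  (∀ i j : Fin n, Proper (G j i)) ∧
  (∀ i j : Fin n, G j i ≠ 0 ↔ (i, j) ∈ E) ∧
  (∀ S : Finset (Fin n),
    ((limMatrix G).submatrix (fun x : {v // v ∈ S} => (x : Fin n))
      (fun x : {v // v ∈ S} => (x : Fin n))).det ≠ 0)

/-- The rows of `A` and `B` indexed by the subset `C` agree, i.e. `C·A = C·B` where `C`
also denotes the selection matrix of `C`. -/
def rowsAgree {n : ℕ} (C : Finset (Fin n)) (A B : Matrix (Fin n) (Fin n) (RatFunc ℝ)) : Prop :=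
  A.submatrix (fun c : {v // v ∈ C} => (c : Fin n)) id
    = B.submatrix (fun c : {v // v ∈ C} => (c : Fin n)) id

/-- `(i, N_i)` is identifiable from the measured node set `C`. -/
def IdentifiableNode {n : ℕ} (E : Finset (Fin n × Fin n)) (i : Fin n)
    (C : Finset (Fin n)) : Prop :=
  ∀ G Gbar : Matrix (Fin n) (Fin n) (RatFunc ℝ),
    Admissible E G → Admissible E Gbar →
    rowsAgree C (1 - G)⁻¹ (1 - Gbar)⁻¹ → ∀ j : Fin n, G j i = Gbar j i

/-- The graph is identifiable from the measured node set `C`. -/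
def IdentifiableGraph {n : ℕ} (E : Finset (Fin n × Fin n)) (C : Finset (Fin n)) : Prop :=
  ∀ G Gbar : Matrix (Fin n) (Fin n) (RatFunc ℝ),
    Admissible E G → Admissible E Gbar →
    rowsAgree C (1 - G)⁻¹ (1 - Gbar)⁻¹ → G = Gbar

/-!
Properness, strict properness and the limit at infinity are read off the valuation `v` at the place
at infinity of `ℝ(z)`: a rational function `f` is proper iff `v f ≤ 1` and strictly proper iff
`v f < 1`, and for proper `f` the limit is the only constant `c` with `v (f - c) < 1`. By the
ultrametric inequality proper functions are closed under subtraction and the limit is additive on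
them. Hence a strictly proper perturbation of `G` leaves `lim (I - G)`, and so all of its principal
minors, unchanged.
-/

section PlaceAtInfinity

open RatFunc (inftyValuation)

section Field

variable {K : Type*} [Field K] [DecidableEq (RatFunc K)] {p q : K[X]}

lemma inftyValuation_algebraMap_le_iff :
    inftyValuation K (algebraMap K[X] (RatFunc K) p) ≤
      inftyValuation K (algebraMap K[X] (RatFunc K) q) ↔ p.degree ≤ q.degree := by
  rcases eq_or_ne p 0 with rfl | hp
  · simp
  rcases eq_or_ne q 0 with rfl | hq
  · simp
  · simp [RatFunc.inftyValuation_apply, hp, hq, degree_eq_natDegree]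

lemma inftyValuation_div_le_one_iff (hq : q ≠ 0) :
    inftyValuation K (algebraMap K[X] (RatFunc K) p / algebraMap K[X] (RatFunc K) q) ≤ 1 ↔
      p.degree ≤ q.degree := by
  have hv : inftyValuation K (algebraMap K[X] (RatFunc K) q) ≠ 0 :=
    (Valuation.ne_zero_iff _).2 (RatFunc.algebraMap_ne_zero hq)
  rw [map_div₀, div_le_one₀ (zero_lt_iff.2 hv), inftyValuation_algebraMap_le_iff]

lemma inftyValuation_div_lt_one_iff (hq : q ≠ 0) :
    inftyValuation K (algebraMap K[X] (RatFunc K) p / algebraMap K[X] (RatFunc K) q) < 1 ↔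
      p.degree < q.degree := by
  have hv : inftyValuation K (algebraMap K[X] (RatFunc K) q) ≠ 0 :=
    (Valuation.ne_zero_iff _).2 (RatFunc.algebraMap_ne_zero hq)
  rw [map_div₀, div_lt_one₀ (zero_lt_iff.2 hv),
    lt_iff_lt_of_le_iff_le inftyValuation_algebraMap_le_iff]

end Field

variable {f g : RatFunc ℝ} {c : ℝ}

lemma proper_iff_inftyValuation_le_one [DecidableEq (RatFunc ℝ)] :
    Proper f ↔ inftyValuation ℝ f ≤ 1 := by
  rw [Proper, ← inftyValuation_div_le_one_iff f.denom_ne_zero, f.num_div_denom]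

lemma strictlyProper_iff_inftyValuation_lt_one [DecidableEq (RatFunc ℝ)] :
    StrictlyProper f ↔ inftyValuation ℝ f < 1 := by
  rw [StrictlyProper, ← inftyValuation_div_lt_one_iff f.denom_ne_zero, f.num_div_denom]

lemma StrictlyProper.proper (hf : StrictlyProper f) : Proper f :=
  le_of_lt hf

lemma Proper.sub (hf : Proper f) (hg : Proper g) : Proper (f - g) := by
  classical
  rw [proper_iff_inftyValuation_le_one] at hf hg ⊢
  exact Valuation.map_sub_le _ hf hg

lemma StrictlyProper.sub (hf : StrictlyProper f) (hg : StrictlyProper g) :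
    StrictlyProper (f - g) := by
  classical
  rw [strictlyProper_iff_inftyValuation_lt_one] at hf hg ⊢
  exact Valuation.map_sub_lt _ hf hg

lemma strictlyProper_zero : StrictlyProper 0 := by
  simp [StrictlyProper]

lemma strictlyProper_C_iff : StrictlyProper (RatFunc.C c) ↔ c = 0 := by
  simp [StrictlyProper]

lemma proper_C (c : ℝ) : Proper (RatFunc.C c) := by
  simpa [Proper] using degree_C_le

lemma strictlyProper_sub_C_iff :
    StrictlyProper (f - RatFunc.C c) ↔ (f.num - C c * f.denom).degree < f.denom.degree := by
  classical
  have hd : algebraMap ℝ[X] (RatFunc ℝ) f.denom ≠ 0 :=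
    RatFunc.algebraMap_ne_zero f.denom_ne_zero
  have hfc : algebraMap ℝ[X] (RatFunc ℝ) (f.num - C c * f.denom) /
      algebraMap ℝ[X] (RatFunc ℝ) f.denom = f - RatFunc.C c := by
    rw [map_sub, map_mul, sub_div, mul_div_cancel_right₀ _ hd, f.num_div_denom,
      RatFunc.algebraMap_C]
  rw [strictlyProper_iff_inftyValuation_lt_one, ← hfc,
    inftyValuation_div_lt_one_iff f.denom_ne_zero]

lemma Proper.strictlyProper_sub_C_limAtInfty (hf : Proper f) :
    StrictlyProper (f - RatFunc.C (limAtInfty f)) := by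
  rw [strictlyProper_sub_C_iff]
  by_cases hdeg : f.num.degree = f.denom.degree
  · have hlim : limAtInfty f = f.num.leadingCoeff := by
      simp [limAtInfty, hdeg, f.monic_denom.leadingCoeff]
    have hnum : f.num ≠ 0 := ne_zero_of_degree_ge_degree hdeg.ge f.denom_ne_zero
    rw [hlim, ← hdeg]
    refine degree_sub_lt_left ?_ hnum ?_
    · rw [degree_C_mul (leadingCoeff_ne_zero.2 hnum), hdeg]
    · simp [f.monic_denom.leadingCoeff]
  · simpa [limAtInfty, hdeg] using lt_of_le_of_ne hf hdeg

lemma Proper.limAtInfty_eq_iff (hf : Proper f) :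
    limAtInfty f = c ↔ StrictlyProper (f - RatFunc.C c) := by
  refine ⟨fun h ↦ h ▸ hf.strictlyProper_sub_C_limAtInfty, fun h ↦ ?_⟩
  have hconst : StrictlyProper (RatFunc.C (limAtInfty f - c)) := by
    simpa using h.sub hf.strictlyProper_sub_C_limAtInfty
  exact sub_eq_zero.1 (strictlyProper_C_iff.1 hconst)

lemma limAtInfty_C (c : ℝ) : limAtInfty (RatFunc.C c) = c := by
  rw [(proper_C c).limAtInfty_eq_iff, sub_self]
  exact strictlyProper_zero

lemma StrictlyProper.limAtInfty_eq_zero (hf : StrictlyProper f) : limAtInfty f = 0 :=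
  if_neg hf.ne

lemma Proper.limAtInfty_sub (hf : Proper f) (hg : Proper g) :
    limAtInfty (f - g) = limAtInfty f - limAtInfty g := by
  rw [(hf.sub hg).limAtInfty_eq_iff, map_sub, sub_sub_sub_comm]
  exact hf.strictlyProper_sub_C_limAtInfty.sub hg.strictlyProper_sub_C_limAtInfty

end PlaceAtInfinity

section NetworkMatrix

variable {n : ℕ} {E : Finset (Fin n × Fin n)} {G W : Matrix (Fin n) (Fin n) (RatFunc ℝ)}

lemma limMatrix_eq_one_sub_map (hG : ∀ a b, Proper (G a b)) :
    limMatrix G = 1 - G.map limAtInfty := by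
  ext a b
  have hone : (1 : Matrix (Fin n) (Fin n) (RatFunc ℝ)) a b =
      RatFunc.C ((1 : Matrix (Fin n) (Fin n) ℝ) a b) := by
    simp [one_apply, apply_ite RatFunc.C]
  rw [limMatrix, of_apply, Matrix.sub_apply, hone, (proper_C _).limAtInfty_sub (hG a b),
    limAtInfty_C, Matrix.sub_apply, map_apply]

lemma limMatrix_sub_of_strictlyProper (hG : ∀ a b, Proper (G a b))
    (hW : ∀ a b, StrictlyProper (W a b)) : limMatrix (G - W) = limMatrix G := by
  have hGW : ∀ a b, Proper ((G - W) a b) := fun a b ↦ (hG a b).sub (hW a b).proper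
  rw [limMatrix_eq_one_sub_map hG, limMatrix_eq_one_sub_map hGW]
  congr 1
  ext a b
  rw [map_apply, Matrix.sub_apply, (hG a b).limAtInfty_sub (hW a b).proper,
    (hW a b).limAtInfty_eq_zero, sub_zero, map_apply]

lemma Admissible.sub_of_strictlyProper (hG : Admissible E G)
    (hW : ∀ a b, StrictlyProper (W a b)) (hE : ∀ i j, (G - W) j i ≠ 0 ↔ (i, j) ∈ E) :
    Admissible E (G - W) := by
  obtain ⟨hproper, -, hminor⟩ := hG
  refine ⟨fun i j ↦ (hproper i j).sub (hW j i).proper, hE, ?_⟩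
  rwa [limMatrix_sub_of_strictlyProper (fun a b ↦ hproper b a) hW]

theorem perturbed_matrix_admissible_general (hG : Admissible E G) (i : Fin n)
    (v : Fin n → RatFunc ℝ) (hv0 : ∀ j, j ∉ Nout E i → v j = 0)
    (hv1 : ∀ j ∈ Nout E i, StrictlyProper (v j) ∧ G j i - v j ≠ 0) :
    Admissible E (G - vecMulVec v (Pi.single i 1)) := by
  have hv : ∀ j, StrictlyProper (v j) := fun j ↦ by
    by_cases hj : j ∈ Nout E i
    · exact (hv1 j hj).1
    · exact hv0 j hj ▸ strictlyProper_zero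
  apply hG.sub_of_strictlyProper
  · intro j k
    obtain rfl | hk := eq_or_ne k i
    · simpa [vecMulVec_apply] using hv j
    · simpa [vecMulVec_apply, hk] using strictlyProper_zero
  · intro k j
    obtain rfl | hk := eq_or_ne k i
    · by_cases hj : j ∈ Nout E k
      · have hkj : (k, j) ∈ E := by simpa [Nout] using hj
        simpa [vecMulVec_apply, hkj] using (hv1 j hj).2
      · simpa [vecMulVec_apply, hv0 j hj] using hG.2.1 k j
    · simpa [vecMulVec_apply, hk] using hG.2.1 k j

end NetworkMatrix

/-- Let `G` be admissible, `v` a vector over `ℝ(z)` with `v j = 0` for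
`j ∉ N_i` and, for every `j ∈ N_i`, `v j` strictly proper and `G j i - v j ≠ 0`. With `u`
the `i`-th standard basis vector, the matrix `Ḡ := G - v uᵀ` is admissible. -/
theorem perturbed_matrix_admissible (n : ℕ) (E : Finset (Fin n × Fin n))
    (hsimple : ∀ w : Fin n, (w, w) ∉ E) (i : Fin n)
    (G : Matrix (Fin n) (Fin n) (RatFunc ℝ)) (hG : Admissible E G)
    (v : Fin n → RatFunc ℝ)
    (hv0 : ∀ j : Fin n, j ∉ Nout E i → v j = 0)
    (hv1 : ∀ j ∈ Nout E i, StrictlyProper (v j) ∧ G j i - v j ≠ 0) :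
    Admissible E (G - Matrix.vecMulVec v (Pi.single i (1 : RatFunc ℝ))) :=
  perturbed_matrix_admissible_general hG i v hv0 hv1
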